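/- Let e : Stream' ℕ → Stream' ℕ be any function satisfying e xs = SCons (2 ^ head xs) ((tail xs) ⊗ (e xs)) for all streams xs, where ⊗ is the shuffle product (binomial convolution) and ⊕ is pointwise addition. Then stream exponentiation distributes over pointwise addition: e (xs ⊕ ys) = (e xs) ⊗ (e ys) for all streams xs, ys. -/

import Mathlib

open Stream'

/-- Pointwise addition of streams. -/
def sadd (xs ys : Stream' ℕ) : Stream' ℕ := fun n => xs.get n + ys.get n

/-- Shuffle product of streams (binomial convolution). -/
def sshuffle (xs ys : Stream' ℕ) : Stream' ℕ :=
  fun n => ∑ k ∈ Finset.range (n + 1), n.choose k * xs.get k * ys.get (n - k)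

infixl:65 " ⊕ " => sadd
infixl:70 " ⊗ " => sshuffle

/-- Exponential generating function of a stream. -/
noncomputable def egf (s : Stream' ℕ) : PowerSeries ℚ :=
  PowerSeries.mk fun n => (s.get n : ℚ) / (n.factorial : ℚ)

theorem egf_inj {s t : Stream' ℕ} (h : egf s = egf t) : s = t := by
  apply Stream'.ext
  intro n
  have := congrArg (PowerSeries.coeff n) h
  simp only [egf, PowerSeries.coeff_mk] at this
  have hn : (n.factorial : ℚ) ≠ 0 := by exact_mod_cast n.factorial_ne_zero
  rw [div_left_inj' hn] at this
  exact_mod_cast this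

theorem egf_add (s t : Stream' ℕ) : egf (sadd s t) = egf s + egf t := by
  ext n
  have : (sadd s t).get n = s.get n + t.get n := rfl
  simp [egf, this, add_div]

theorem egf_mul (s t : Stream' ℕ) : egf (sshuffle s t) = egf s * egf t := by
  ext n
  have : (sshuffle s t).get n =
    ∑ k ∈ Finset.range (n + 1), n.choose k * s.get k * t.get (n - k) := rfl
  rw [PowerSeries.coeff_mul, Finset.Nat.sum_antidiagonal_eq_sum_range_succ_mk]
  simp only [egf, this, PowerSeries.coeff_mk, Nat.cast_sum, Finset.sum_div]
  refine Finset.sum_congr rfl fun k hk => ?_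
  have hk' : k ≤ n := by simpa [Nat.lt_succ_iff] using hk
  push_cast
  rw [Nat.cast_choose ℚ hk']
  have h1 : (n.factorial : ℚ) ≠ 0 := by exact_mod_cast n.factorial_ne_zero
  have h2 : (k.factorial : ℚ) ≠ 0 := by exact_mod_cast k.factorial_ne_zero
  have h3 : ((n - k).factorial : ℚ) ≠ 0 := by exact_mod_cast (n - k).factorial_ne_zero
  field_simp

theorem egf_tail (s : Stream' ℕ) : egf s.tail = PowerSeries.derivative ℚ (egf s) := by
  ext n
  have : s.tail.get n = s.get (n + 1) := rfl
  rw [PowerSeries.coeff_derivative]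
  simp only [egf, this, PowerSeries.coeff_mk, Nat.factorial_succ]
  have h1 : (n.factorial : ℚ) ≠ 0 := by exact_mod_cast n.factorial_ne_zero
  have h2 : (n + 1 : ℚ) ≠ 0 := by positivity
  push_cast
  field_simp

theorem shuffle_ode_unique (t z w : Stream' ℕ) (h0 : z.head = w.head)
    (hz : z.tail = sshuffle t z) (hw : w.tail = sshuffle t w) : z = w := by
  apply Stream'.ext
  intro n
  induction n using Nat.strong_induction_on with
  | _ n ih =>
    cases n with
    | zero => exact h0
    | succ n =>
      have a : z.tail.get n = w.tail.get n := by
        rw [hz, hw]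
        change ∑ k ∈ Finset.range (n + 1), n.choose k * t.get k * z.get (n - k) =
          ∑ k ∈ Finset.range (n + 1), n.choose k * t.get k * w.get (n - k)
        refine Finset.sum_congr rfl fun k hk => ?_
        rw [ih (n - k) (by omega)]
      exact a

theorem stmt_11 (e : Stream' ℕ → Stream' ℕ)
    (he : ∀ xs, e xs = Stream'.cons (2 ^ xs.head) (xs.tail ⊗ e xs)) :
    ∀ xs ys, e (xs ⊕ ys) = (e xs) ⊗ (e ys) := by
  intro xs ys
  have hh : ∀ xs, (e xs).head = 2 ^ xs.head := fun xs => by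
    rw [he xs]; rfl
  have ht : ∀ xs, (e xs).tail = sshuffle xs.tail (e xs) := fun xs => by
    conv_lhs => rw [he xs]
    rfl
  apply shuffle_ode_unique (sadd xs ys).tail
  · rw [hh]
    have h1 : (sadd xs ys).head = xs.head + ys.head := rfl
    have h2 : (sshuffle (e xs) (e ys)).head = (e xs).head * (e ys).head := by
      change ∑ k ∈ Finset.range (0 + 1), Nat.choose 0 k * (e xs).get k * (e ys).get (0 - k) = _
      simp [Stream'.head]
    rw [h1, h2, hh, hh, pow_add]
  · exact ht _
  · apply egf_inj
    have hx := congrArg egf (ht xs)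
    have hy := congrArg egf (ht ys)
    simp only [egf_tail, egf_mul, egf_add] at hx hy ⊢
    rw [Derivation.leibniz, hx, hy, map_add]
    simp only [smul_eq_mul]
    ring
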